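/- Let F be a field of characteristic p with p > 2 (CharP F p and 2 < p). Then for every t ≥ 2 there exists N : ℕ and a projection substitution θ : (Fin N × Fin N) → MvPolynomial (Fin t × Fin t) F such that MvPolynomial.aeval θ Q_N = HC_t. In other words, over any field of characteristic greater than 2, the Hamiltonian cycle polynomial HC_t is a projection of Q_N for some N. -/

import Mathlib

open scoped BigOperators

open Classical in
/-- The set of all `n`-cycles in `Equiv.Perm (Fin n)`. -/
noncomputable def nCycles (n : ℕ) : Finset (Equiv.Perm (Fin n)) :=
  Finset.univ.filter fun π => π.IsCycle ∧ π.support = Finset.univ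

/-- The Hamiltonian cycle polynomial `HC_n`. -/
noncomputable def HC (R : Type*) [CommRing R] (n : ℕ) : MvPolynomial (Fin n × Fin n) R :=
  ∑ π ∈ nCycles n, ∏ i : Fin n, MvPolynomial.X (i, π i)

/-- `HC_n^{(2)}`, with every variable squared. -/
noncomputable def HC2 (R : Type*) [CommRing R] (n : ℕ) : MvPolynomial (Fin n × Fin n) R :=
  ∑ π ∈ nCycles n, ∏ i : Fin n, (MvPolynomial.X (i, π i)) ^ 2

/-- `Q_n := HC_n + HC_n^{(2)}`. -/
noncomputable def Q (R : Type*) [CommRing R] (n : ℕ) : MvPolynomial (Fin n × Fin n) R :=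
  HC R n + HC2 R n

/-- A projection substitution sends each variable to a variable or a constant. -/
def IsProjection {σ τ F : Type*} [CommSemiring F] (θ : σ → MvPolynomial τ F) : Prop :=
  ∀ v : σ, (∃ k : τ, θ v = MvPolynomial.X k) ∨ (∃ c : F, θ v = MvPolynomial.C c)

/-!
Take two vertices `s ≠ m` and weights `c₁, …, cₖ` with `∑ cⱼ = 1` and `∑ cⱼ² = 0`. Add a chain
`m → n₁ → ⋯ → nₖ` of edges of weight `1`. Every vertex of the chain other than `nₖ` may also leave
along the old edges of `m`, while `nₖ` leaves along the old edges of `s`, and `s` now leads only to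
the new vertices, to `nⱼ` with weight `cⱼ`. A Hamiltonian cycle enters the chain from `s` at exactly
one `nⱼ`. This cuts the chain into `m → n₁ → ⋯ → nⱼ₋₁`, which plays the role of `m`, and
`s → nⱼ → ⋯ → nₖ`, which plays the role of `s`. So the new Hamiltonian cycle sum is `∑ cⱼ` times
the old one. Squaring every entry gives the same construction with weights `cⱼ²`, hence the factor
`∑ cⱼ²`, so `HC_t` is recovered from `Q_N` while the squared summand vanishes.

Such weights exist when `2` is a unit and `-1` is a sum of squares `∑ aᵢ²`: take `1/2`, `1/2` and
all `±aᵢ/2`. In positive characteristic `-1 = p - 1` is a sum of ones.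
-/

open Equiv Function

section Insertion

variable {V : Type*} {σ : Perm V}

lemma isCycleOn_univ_iff_sameCycle : σ.IsCycleOn Set.univ ↔ ∀ x y, σ.SameCycle x y := by
  simp [Perm.IsCycleOn, Set.bijOn_univ, σ.bijective]

lemma isCycleOn_univ_iff_forall_invariant :
    σ.IsCycleOn Set.univ ↔
      ∀ P : V → Prop, (∀ x, P (σ x) ↔ P x) → ∀ x y, P x → P y := by
  rw [isCycleOn_univ_iff_sameCycle]
  constructor
  · intro h P hP x y hx
    obtain ⟨k, rfl⟩ := h x y
    have hk : ∀ z, P ((σ ^ k) z) ↔ P z := by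
      induction k using Int.induction_on with
      | zero => simp
      | succ k ih => intro z; rw [zpow_add_one, Perm.mul_apply, ih, hP]
      | pred k ih => intro z; rw [zpow_sub_one, Perm.mul_apply, ih, ← hP]; simp
    exact (hk x).2 hx
  · intro h x y
    exact h (σ.SameCycle x) (fun _ => Perm.sameCycle_apply_right) x y (.refl _ _)

lemma isCycleOn_univ_permCongr_iff {W : Type*} (e : V ≃ W) :
    (e.permCongr σ).IsCycleOn Set.univ ↔ σ.IsCycleOn Set.univ := by
  simp only [isCycleOn_univ_iff_forall_invariant]
  constructor
  · intro h P hP x y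
    simpa using h (P ∘ e.symm) (by simp [hP]) (e x) (e y)
  · intro h P hP x y
    simpa using h (P ∘ e) (fun z => by simpa using hP (e z)) (e.symm x) (e.symm y)

lemma isCycle_and_support_eq_univ_iff [Fintype V] [DecidableEq V] [Nontrivial V] :
    σ.IsCycle ∧ σ.support = Finset.univ ↔ σ.IsCycleOn Set.univ := by
  constructor
  · rintro ⟨hσ, hsupp⟩
    have h := Perm.IsCycle.isCycleOn hσ
    rwa [← Perm.coe_support_eq_set_support, hsupp, Finset.coe_univ] at h
  · intro h
    have apply_ne (x : V) : σ x ≠ x := h.apply_ne Set.nontrivial_univ (Set.mem_univ x)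
    refine ⟨?_, by ext x; simp [apply_ne x]⟩
    exact Perm.isCycle_iff_exists_isCycleOn.2 ⟨_, Set.nontrivial_univ, h, fun _ _ => trivial⟩

lemma not_isCycleOn_univ_optionCongr [Nonempty V] :
    ¬ Perm.IsCycleOn σ.optionCongr Set.univ := fun h =>
  h.apply_ne Set.nontrivial_univ (Set.mem_univ none) (by simp)

variable [DecidableEq V]

/-- The permutation `σ` with the new point `none` inserted between `i` and `σ i`. -/
def insertAfter (σ : Perm V) (i : V) : Perm (Option V) :=
  swap none (some (σ i)) * σ.optionCongr

@[simp]
lemma insertAfter_none (i : V) : insertAfter σ i none = some (σ i) := by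
  simp [insertAfter]

@[simp]
lemma insertAfter_some_self (i : V) : insertAfter σ i (some i) = none := by
  simp [insertAfter]

lemma insertAfter_some_of_ne {i a : V} (h : a ≠ i) :
    insertAfter σ i (some a) = some (σ a) := by
  simp [insertAfter, swap_apply_of_ne_of_ne, h]

lemma isCycleOn_univ_insertAfter_iff (i : V) :
    (insertAfter σ i).IsCycleOn Set.univ ↔ σ.IsCycleOn Set.univ := by
  simp only [isCycleOn_univ_iff_forall_invariant]
  constructor
  · intro h P hP x y
    refine h (fun o => o.elim (P (σ i)) P) ?_ (some x) (some y)
    rintro (_ | a)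
    · simp
    · obtain rfl | ha := eq_or_ne a i
      · simpa using hP a
      · simpa [insertAfter_some_of_ne ha] using hP a
  · intro h P hP
    have hnone : P (some (σ i)) ↔ P none := by simpa using hP none
    have hself : P none ↔ P (some i) := by simpa using hP (some i)
    have hsome : ∀ x y, P (some x) → P (some y) := by
      refine h (P ∘ some) fun a => ?_
      obtain rfl | ha := eq_or_ne a i
      · exact hnone.trans hself
      · simpa [insertAfter_some_of_ne ha] using hP (some a)
    rintro (_ | x) (_ | y) hx
    · exact hx
    · exact hsome _ _ (hself.1 hx)
    · exact hself.2 (hsome _ _ hx)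
    · exact hsome _ _ hx

lemma sum_perm_option {M : Type*} [Fintype V] [AddCommMonoid M] (f : Perm (Option V) → M) :
    ∑ π, f π = ∑ σ : Perm V, (f σ.optionCongr + ∑ i, f (insertAfter σ i)) := by
  rw [← Perm.decomposeOption.symm.sum_comp, Fintype.sum_prod_type_right]
  refine Finset.sum_congr rfl fun σ _ => ?_
  rw [Fintype.sum_option, ← Equiv.sum_comp σ]
  simp only [Perm.decomposeOption_symm_apply, swap_self, insertAfter]
  rfl

lemma prod_insertAfter {R : Type*} [Fintype V] [CommMonoid R] (A : Option V → Option V → R)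
    (σ : Perm V) (i : V) :
    ∏ x, A x (insertAfter σ i x) = A (some i) none *
      ∏ a, update (fun a b => A (some a) (some b)) i (fun b => A none (some b)) a (σ a) := by
  have hcompl : ∏ a ∈ {i}ᶜ, A (some a) (insertAfter σ i (some a)) = ∏ a ∈ {i}ᶜ,
      update (fun a b => A (some a) (some b)) i (fun b => A none (some b)) a (σ a) := by
    refine Finset.prod_congr rfl fun a ha => ?_
    have hai : a ≠ i := by simpa using ha
    rw [insertAfter_some_of_ne hai, update_of_ne hai]
  rw [Fintype.prod_option, Fintype.prod_eq_mul_prod_compl i, hcompl,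
    Fintype.prod_eq_mul_prod_compl i, insertAfter_none, insertAfter_some_self, update_self,
    mul_left_comm]

end Insertion

section HamSum

variable {V W R S : Type*} [Fintype V] [DecidableEq V] [Fintype W] [DecidableEq W]
  [CommSemiring R] [CommSemiring S]

open Classical in
/-- The Hamiltonian cycle sum of a square matrix `A`: the value at `A` of the Hamiltonian cycle
polynomial. Hamiltonian cycles are encoded as permutations with a single orbit, so in contrast to
`nCycles` the identity of a one-point type and of the empty type count. -/
noncomputable def hamSum (A : V → V → R) : R :=
  ∑ π : Perm V with π.IsCycleOn Set.univ, ∏ x, A x (π x)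

lemma map_hamSum (f : R →+* S) (A : V → V → R) :
    f (hamSum A) = hamSum fun a b => f (A a b) := by
  simp [hamSum, map_sum, map_prod]

lemma hamSum_reindex (e : V ≃ W) (A : W → W → R) :
    (hamSum fun a b => A (e a) (e b)) = hamSum A := by
  refine Finset.sum_equiv e.permCongr (by simp [isCycleOn_univ_permCongr_iff]) fun π _ => ?_
  exact Fintype.prod_equiv e _ _ (by simp)

lemma hamSum_eq_zero {A : V → V → R} {s : V} (h : ∀ b, A s b = 0) : hamSum A = 0 :=
  Finset.sum_eq_zero fun π _ => Finset.prod_eq_zero (Finset.mem_univ s) (h (π s))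

lemma hamSum_option [Nonempty V] (A : Option V → Option V → R) :
    hamSum A = ∑ i, A (some i) none *
      hamSum (update (fun a b => A (some a) (some b)) i fun b => A none (some b)) := by
  classical
  simp only [hamSum, Finset.sum_filter, Finset.mul_sum]
  rw [sum_perm_option, Finset.sum_comm]
  refine Finset.sum_congr rfl fun σ _ => ?_
  rw [if_neg not_isCycleOn_univ_optionCongr, zero_add]
  refine Finset.sum_congr rfl fun i _ => ?_
  simp only [isCycleOn_univ_insertAfter_iff, prod_insertAfter, mul_ite, mul_zero]

end HamSum

section HC

variable {R T : Type*} [CommRing R] [CommSemiring T] [Algebra R T] {n : ℕ}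

lemma sum_nCycles (hn : 2 ≤ n) (A : Fin n → Fin n → T) :
    ∑ π ∈ nCycles n, ∏ i, A i (π i) = hamSum A := by
  have : Nontrivial (Fin n) := Fin.nontrivial_iff_two_le.2 hn
  refine Finset.sum_congr ?_ fun _ _ => rfl
  ext π
  simp [nCycles, isCycle_and_support_eq_univ_iff]

lemma HC_eq_hamSum (hn : 2 ≤ n) : HC R n = hamSum fun i j => MvPolynomial.X (i, j) :=
  sum_nCycles hn fun i j => MvPolynomial.X (i, j)

lemma aeval_Q (hn : 2 ≤ n) (θ : Fin n × Fin n → T) :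
    MvPolynomial.aeval θ (Q R n) =
      (hamSum fun i j => θ (i, j)) + hamSum fun i j => θ (i, j) ^ 2 := by
  simp only [Q, HC, HC2, map_add, map_sum, map_prod, map_pow, MvPolynomial.aeval_X,
    ← sum_nCycles hn]

end HC

section Gadget

universe u

variable {R : Type*} [CommSemiring R]

section AddVertex

variable {V : Type u} [DecidableEq V]

/-- One step of the chain construction: the matrix `A` with a new vertex `none`, entered from `s`
with weight `c` and from `m` with weight `1`, whose outgoing edges are those of `m`. -/
def addVertex (A : V → V → R) (s m : V) (c : R) : Option V → Option V → R
  | some a, some b => A a b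
  | some a, none => if a = s then c else if a = m then 1 else 0
  | none, some b => A m b
  | none, none => 0

variable [Fintype V] (A : V → V → R) {s m : V} (hsm : s ≠ m) (c : R) (ρ : V → R)

include hsm

lemma hamSum_update_addVertex_some :
    hamSum (update (addVertex A s m c) (some s) fun b => b.elim 0 ρ) =
      hamSum (update A s ρ) := by
  have : Nonempty V := ⟨s⟩
  have hrest : (fun a b => update (addVertex A s m c) (some s) (fun b => b.elim 0 ρ)
      (some a) (some b)) = update A s ρ := by
    ext a b
    obtain rfl | ha := eq_or_ne a s
    · simp
    · simp [addVertex, ha]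
  rw [hamSum_option, hrest, Fintype.sum_eq_single m]
  · have hrow : update (update A s ρ) m (A m) = update A s ρ := by simp [hsm.symm]
    simp [addVertex, hsm.symm, hrow]
  · intro a ham
    obtain rfl | has := eq_or_ne a s
    · simp
    · simp [addVertex, has, ham]

lemma hamSum_update_addVertex_none :
    hamSum (update (addVertex A s m c) none fun b => b.elim 0 ρ) =
      c * hamSum (update A s ρ) + hamSum (update A m ρ) := by
  have : Nonempty V := ⟨s⟩
  rw [hamSum_option, Fintype.sum_eq_add s m hsm]
  · simp [addVertex, hsm.symm]
  · rintro a ⟨has, ham⟩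
    simp [addVertex, has, ham]

end AddVertex

theorem exists_hamSum_eq_add_sum_mul {E : Set R} (h0 : 0 ∈ E) (h1 : 1 ∈ E) (c : List R)
    (hc : ∀ x ∈ c, x ∈ E) {V : Type u} [Fintype V] [DecidableEq V] {A : V → V → R}
    (hA : ∀ a b, A a b ∈ E) {s m : V} (hsm : s ≠ m) {ρ : V → R} (hρ : ∀ b, ρ b ∈ E) :
    ∃ (W : Type u) (_ : Fintype W) (_ : DecidableEq W) (B : W → W → R),
      Fintype.card V ≤ Fintype.card W ∧ (∀ x y, B x y ∈ E) ∧
        hamSum B = hamSum (update A m ρ) + c.sum * hamSum (update A s ρ) := by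
  induction c generalizing V with
  | nil =>
    refine ⟨V, inferInstance, inferInstance, update A m ρ, le_rfl, fun x y => ?_, by simp⟩
    obtain rfl | hx := eq_or_ne x m
    · simpa using hρ y
    · simpa [hx] using hA x y
  | cons x c ih =>
    have hA' : ∀ a b, addVertex A s m x a b ∈ E := by
      rintro (_ | a) (_ | b) <;> simp only [addVertex]
      · exact h0
      · exact hA m b
      · split_ifs
        exacts [hc x (by simp), h1, h0]
      · exact hA a b
    have hρ' : ∀ b : Option V, b.elim 0 ρ ∈ E := by
      rintro (_ | b)
      exacts [h0, hρ b]
    obtain ⟨W, _, _, B, hcard, hB, hsum⟩ :=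
      ih (fun y hy => hc y (by simp [hy])) hA' (Option.some_ne_none s) hρ'
    refine ⟨W, inferInstance, inferInstance, B, le_trans (by simp) hcard, hB, ?_⟩
    rw [hsum, hamSum_update_addVertex_none A hsm, hamSum_update_addVertex_some A hsm,
      List.sum_cons]
    ring

theorem exists_hamSum_eq_sum_mul {E : Set R} (h0 : 0 ∈ E) (h1 : 1 ∈ E) (c : List R)
    (hc : ∀ x ∈ c, x ∈ E) {V : Type u} [Fintype V] [DecidableEq V] [Nontrivial V] {A : V → V → R}
    (hA : ∀ a b, A a b ∈ E) :
    ∃ n, ∃ B : Fin n → Fin n → R,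
      Fintype.card V ≤ n ∧ (∀ i j, B i j ∈ E) ∧ hamSum B = c.sum * hamSum A := by
  obtain ⟨s, m, hsm⟩ := exists_pair_ne V
  have hA' : ∀ a b, update A s 0 a b ∈ E := by
    intro a b
    obtain rfl | ha := eq_or_ne a s
    · simpa using h0
    · simpa [ha] using hA a b
  obtain ⟨W, _, _, B, hcard, hB, hsum⟩ :=
    exists_hamSum_eq_add_sum_mul h0 h1 c hc hA' hsm (hA s)
  refine ⟨Fintype.card W, fun i j => B ((Fintype.equivFin W).symm i) ((Fintype.equivFin W).symm j),
    hcard, fun _ _ => hB _ _, ?_⟩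
  have hdead : hamSum (update (update A s 0) m (A s)) = 0 :=
    hamSum_eq_zero (s := s) (by simp [hsm])
  rw [hamSum_reindex, hsum, hdead, zero_add, update_idem, update_eq_self]

lemma exists_hamSum_eq_and_hamSum_map_eq {S : Type*} [CommSemiring S] {f : R → S} (hf0 : f 0 = 0)
    (hf1 : f 1 = 1) {E : Set R} (h0 : 0 ∈ E) (h1 : 1 ∈ E) (c : List R) (hc : ∀ x ∈ c, x ∈ E)
    {V : Type u} [Fintype V] [DecidableEq V] [Nontrivial V] {A : V → V → R}
    (hA : ∀ a b, A a b ∈ E) :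
    ∃ n, ∃ B : Fin n → Fin n → R, Fintype.card V ≤ n ∧ (∀ i j, B i j ∈ E) ∧
      hamSum B = c.sum * hamSum A ∧
      (hamSum fun i j => f (B i j)) = (c.map f).sum * hamSum fun a b => f (A a b) := by
  -- The construction for `A` and the one for its image under `f` run simultaneously in `R × S`.
  let graph : R → R × S := fun x => (x, f x)
  obtain ⟨n, B, hn, hB, hsum⟩ := exists_hamSum_eq_sum_mul (E := graph '' E)
    ⟨0, h0, by simp [graph, hf0]⟩ ⟨1, h1, by simp [graph, hf1]⟩ (c.map graph)
    (by simpa using fun x hx => ⟨x, hc x hx, rfl⟩)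
    fun a b => Set.mem_image_of_mem graph (hA a b)
  choose B' hB' hBB' using hB
  obtain rfl : (fun i j => graph (B' i j)) = B := funext₂ hBB'
  refine ⟨n, B', hn, hB', ?_, ?_⟩
  · have h := congrArg (RingHom.fst R S) hsum
    rw [map_mul, map_list_sum, map_hamSum, map_hamSum, List.map_map] at h
    simpa [graph, comp_def] using h
  · have h := congrArg (RingHom.snd R S) hsum
    rw [map_mul, map_list_sum, map_hamSum, map_hamSum, List.map_map] at h
    simpa [graph, comp_def] using h

end Gadget

section Weights

variable {R : Type*} [CommRing R]

lemma exists_list_sum_eq_zero_of_isSumSq {a : R} (ha : IsSumSq a) :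
    ∃ l : List R, l.sum = 0 ∧ (l.map (· ^ 2)).sum = 2 * a := by
  induction ha with
  | zero => exact ⟨[], by simp⟩
  | sq_add x _ ih =>
    obtain ⟨l, hsum, hsq⟩ := ih
    refine ⟨x :: -x :: l, by simp [hsum], ?_⟩
    simp only [List.map_cons, List.sum_cons, hsq]
    ring

lemma exists_list_sum_eq_one_of_isSumSq_neg_one (h2 : IsUnit (2 : R)) (h : IsSumSq (-1 : R)) :
    ∃ l : List R, l.sum = 1 ∧ (l.map (· ^ 2)).sum = 0 := by
  obtain ⟨l, hsum, hsq⟩ := exists_list_sum_eq_zero_of_isSumSq h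
  obtain ⟨r, hr⟩ := h2.exists_right_inv
  refine ⟨r :: r :: l.map (r * ·), ?_, ?_⟩
  · have hscaled : (l.map (r * ·)).sum = 0 := by
      rw [List.sum_map_mul_left, List.map_id', hsum, mul_zero]
    simp only [List.sum_cons, hscaled]
    linear_combination hr
  · simp only [List.map_cons, List.map_map, comp_def, mul_pow, List.sum_cons,
      List.sum_map_mul_left, hsq]
    ring

lemma isSumSq_neg_one_of_charP (p : ℕ) [NeZero p] [CharP R p] : IsSumSq (-1 : R) := by
  have h : ((p - 1 : ℕ) : R) = -1 := by
    rw [Nat.cast_pred (NeZero.pos p), CharP.cast_eq_zero, zero_sub]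
  exact h ▸ IsSumSq.natCast (p - 1)

end Weights

theorem exists_isProjection_aeval_Q_eq_HC {R : Type*} [CommRing R] {l : List R}
    (hsum : l.sum = 1) (hsq : (l.map (· ^ 2)).sum = 0) {t : ℕ} (ht : 2 ≤ t) :
    ∃ (N : ℕ) (θ : Fin N × Fin N → MvPolynomial (Fin t × Fin t) R),
      IsProjection θ ∧ MvPolynomial.aeval θ (Q R N) = HC R t := by
  let E : Set (MvPolynomial (Fin t × Fin t) R) :=
    {q | (∃ k, q = MvPolynomial.X k) ∨ ∃ a, q = MvPolynomial.C a}
  have var_mem (k : Fin t × Fin t) : MvPolynomial.X k ∈ E := .inl ⟨k, rfl⟩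
  have const_mem (a : R) : MvPolynomial.C a ∈ E := .inr ⟨a, rfl⟩
  have : Nontrivial (Fin t) := Fin.nontrivial_iff_two_le.2 ht
  obtain ⟨N, B, htN, hB, hsumB, hsqB⟩ :=
    exists_hamSum_eq_and_hamSum_map_eq (f := (· ^ 2)) (zero_pow two_ne_zero) (one_pow 2)
      (by simpa using const_mem 0) (by simpa using const_mem 1)
      (l.map MvPolynomial.C) (by simp [const_mem])
      (A := fun i j => MvPolynomial.X (i, j)) fun i j => var_mem (i, j)
  rw [Fintype.card_fin] at htN
  rw [← map_list_sum, hsum, map_one, one_mul, ← HC_eq_hamSum ht] at hsumB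
  have hsqC : ((l.map MvPolynomial.C).map (· ^ 2)).sum = (0 : MvPolynomial (Fin t × Fin t) R) := by
    rw [List.map_map, ← map_zero MvPolynomial.C, ← hsq, map_list_sum, List.map_map]
    simp [comp_def]
  rw [hsqC, zero_mul] at hsqB
  refine ⟨N, fun v => B v.1 v.2, fun v => hB v.1 v.2, ?_⟩
  rw [aeval_Q (ht.trans htN), hsumB, hsqB, add_zero]

theorem stmt15_general {R : Type*} [CommRing R] (h2 : IsUnit (2 : R)) (h : IsSumSq (-1 : R))
    (t : ℕ) (ht : 2 ≤ t) :
    ∃ (N : ℕ) (θ : Fin N × Fin N → MvPolynomial (Fin t × Fin t) R),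
      IsProjection θ ∧ MvPolynomial.aeval θ (Q R N) = HC R t := by
  obtain ⟨l, hsum, hsq⟩ := exists_list_sum_eq_one_of_isSumSq_neg_one h2 h
  exact exists_isProjection_aeval_Q_eq_HC hsum hsq ht

/-- Over any field of characteristic `p > 2`, the Hamiltonian cycle polynomial `HC_t`
is a projection of `Q_N` for some `N`. -/
theorem stmt15 {F : Type*} [Field F] (p : ℕ) [CharP F p] (hp : 2 < p)
    (t : ℕ) (ht : 2 ≤ t) :
    ∃ (N : ℕ) (θ : Fin N × Fin N → MvPolynomial (Fin t × Fin t) F),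
      IsProjection θ ∧ MvPolynomial.aeval θ (Q F N) = HC F t := by
  have : NeZero p := ⟨by omega⟩
  have h2 : (2 : F) ≠ 0 := Ring.two_ne_zero (by rw [ringChar.eq F p]; omega)
  exact stmt15_general h2.isUnit (isSumSq_neg_one_of_charP p) t ht
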